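/- arXiv:math/0508255 — 2 statements merged into one kernel-verified Lean document; each statement's English description precedes it below -/
import Mathlib

section
/- Let E be a real Hilbert space, f : E → ℝ a differentiable function with gradient ∇f, and x : ℝ → E a differentiable curve such that x(s) → c₋ as s → −∞ and x(s) → c₊ as s → +∞. Assume that s ↦ ‖x'(s)‖² and s ↦ ‖∇f(x(s))‖² are integrable on ℝ. Then the Bogomol'nyi identity holds: (1/2)∫_ℝ (‖x'(s)‖² + ‖∇f(x(s))‖²) ds = (1/2)∫_ℝ ‖x'(s) + ∇f(x(s))‖² ds + f(c₋) − f(c₊), and likewise (1/2)∫_ℝ (‖x'(s)‖² + ‖∇f(x(s))‖²) ds = (1/2)∫_ℝ ‖x'(s) − ∇f(x(s))‖² ds + f(c₊) − f(c₋). -/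
open MeasureTheory Filter

/-- **Bogomol'nyi identity.** For a real Hilbert space `E`, a differentiable
function `f : E → ℝ` with gradient `gradf`, and a differentiable curve
`x : ℝ → E` with derivative `x'` converging to `cm` at `-∞` and to `cp` at `+∞`,
such that `‖x'‖²` and `‖∇f(x)‖²` are integrable, the energy
`(1/2)∫ (‖x'‖² + ‖∇f(x)‖²)` equals
`(1/2)∫ ‖x' + ∇f(x)‖² + f(cm) - f(cp)` and also
`(1/2)∫ ‖x' - ∇f(x)‖² + f(cp) - f(cm)`. -/
theorem bogomolnyi_identity {E : Type*} [NormedAddCommGroup E] [InnerProductSpace ℝ E]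
    [CompleteSpace E]
    (f : E → ℝ) (gradf : E → E) (hf : ∀ p, HasGradientAt f (gradf p) p)
    (x : ℝ → E) (x' : ℝ → E) (hx : ∀ s, HasDerivAt x (x' s) s)
    (cm cp : E)
    (hcm : Tendsto x atBot (nhds cm)) (hcp : Tendsto x atTop (nhds cp))
    (hint1 : Integrable fun s => ‖x' s‖ ^ 2)
    (hint2 : Integrable fun s => ‖gradf (x s)‖ ^ 2) :
    ((1 / 2 : ℝ) * ∫ s, (‖x' s‖ ^ 2 + ‖gradf (x s)‖ ^ 2) =
      (1 / 2 : ℝ) * (∫ s, ‖x' s + gradf (x s)‖ ^ 2) + (f cm - f cp)) ∧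
    ((1 / 2 : ℝ) * ∫ s, (‖x' s‖ ^ 2 + ‖gradf (x s)‖ ^ 2) =
      (1 / 2 : ℝ) * (∫ s, ‖x' s - gradf (x s)‖ ^ 2) + (f cp - f cm)) := by
  have hd : ∀ s, HasDerivAt (fun s => f (x s)) (inner ℝ (gradf (x s)) (x' s)) s := by
    intro s
    have h := (hf (x s)).hasFDerivAt.comp_hasDerivAt s (hx s)
    simpa using! h
  have hm : AEStronglyMeasurable (fun s => inner ℝ (gradf (x s)) (x' s)) volume := by
    have h : (fun s => inner ℝ (gradf (x s)) (x' s)) = deriv (fun s => f (x s)) :=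
      funext fun s => (hd s).deriv.symm
    rw [h]
    exact (measurable_deriv _).aestronglyMeasurable
  have hi : Integrable (fun s => inner ℝ (gradf (x s)) (x' s)) := by
    refine (hint1.add hint2).mono' hm (Eventually.of_forall fun s => ?_)
    have h := norm_inner_le_norm (𝕜 := ℝ) (gradf (x s)) (x' s)
    simp only [Pi.add_apply]
    nlinarith [sq_nonneg (‖gradf (x s)‖ - ‖x' s‖), sq_nonneg ‖gradf (x s)‖, sq_nonneg ‖x' s‖]
  have hI : ∫ s, inner ℝ (gradf (x s)) (x' s) = f cp - f cm :=
    integral_of_hasDerivAt_of_tendsto hd hi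
      ((hf cm).hasFDerivAt.continuousAt.tendsto.comp hcm)
      ((hf cp).hasFDerivAt.continuousAt.tendsto.comp hcp)
  have hs : Integrable (fun s => ‖x' s‖ ^ 2 + ‖gradf (x s)‖ ^ 2) := hint1.add hint2
  constructor
  · have h : ∀ s, ‖x' s + gradf (x s)‖ ^ 2 =
        (‖x' s‖ ^ 2 + ‖gradf (x s)‖ ^ 2) + 2 * inner ℝ (gradf (x s)) (x' s) := by
      intro s
      rw [norm_add_sq_real, real_inner_comm]
      ring
    simp_rw [h]
    rw [integral_add hs (hi.const_mul 2), integral_const_mul, hI]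
    ring
  · have h : ∀ s, ‖x' s - gradf (x s)‖ ^ 2 =
        (‖x' s‖ ^ 2 + ‖gradf (x s)‖ ^ 2) - 2 * inner ℝ (gradf (x s)) (x' s) := by
      intro s
      rw [norm_sub_sq_real, real_inner_comm]
      ring
    simp_rw [h]
    rw [integral_sub hs (hi.const_mul 2), integral_const_mul, hI]
    ring
end

section
/- Let E be a real Hilbert space, f : E → ℝ a differentiable function with gradient ∇f, and x : ℝ → E a differentiable curve such that x(s) → c₋ as s → −∞ and x(s) → c₊ as s → +∞, and such that s ↦ ‖x'(s)‖² and s ↦ ‖∇f(x(s))‖² are integrable on ℝ. Then the energy satisfies E(x) = (1/2)∫_ℝ (‖x'(s)‖² + ‖∇f(x(s))‖²) ds ≥ |f(c₊) − f(c₋)|; moreover, if x is a downward gradient flow line, i.e. x'(s) = −∇f(x(s)) for every s ∈ ℝ, then E(x) = f(c₋) − f(c₊). -/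
open MeasureTheory Filter

/-- **Energy bound and energy of gradient flow lines.** For a real Hilbert space `E`,
a differentiable `f : E → ℝ` with gradient `gradf`, and a differentiable curve
`x : ℝ → E` with derivative `x'`, converging to `cm` at `-∞` and `cp` at `+∞`,
with `‖x'‖²` and `‖∇f(x)‖²` integrable, the energy
`E(x) = (1/2)∫ (‖x'‖² + ‖∇f(x)‖²)` satisfies `E(x) ≥ |f(cp) − f(cm)|`; moreover if
`x' = −∇f(x)` everywhere (downward gradient flow line) then `E(x) = f(cm) − f(cp)`. -/
theorem energy_ge_action_difference {E : Type*} [NormedAddCommGroup E] [InnerProductSpace ℝ E]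
    [CompleteSpace E]
    (f : E → ℝ) (gradf : E → E) (hf : ∀ p, HasGradientAt f (gradf p) p)
    (x : ℝ → E) (x' : ℝ → E) (hx : ∀ s, HasDerivAt x (x' s) s)
    (cm cp : E)
    (hcm : Tendsto x atBot (nhds cm)) (hcp : Tendsto x atTop (nhds cp))
    (hint1 : Integrable fun s => ‖x' s‖ ^ 2)
    (hint2 : Integrable fun s => ‖gradf (x s)‖ ^ 2) :
    ((1 / 2 : ℝ) * ∫ s, (‖x' s‖ ^ 2 + ‖gradf (x s)‖ ^ 2) ≥ |f cp - f cm|) ∧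
    ((∀ s, x' s = -gradf (x s)) →
      (1 / 2 : ℝ) * ∫ s, (‖x' s‖ ^ 2 + ‖gradf (x s)‖ ^ 2) = f cm - f cp) := by
  have hg : ∀ s, HasDerivAt (fun s => f (x s)) (inner ℝ (gradf (x s)) (x' s)) s := by
    intro s
    have h := (hf (x s)).hasFDerivAt.comp_hasDerivAt s (hx s)
    simpa [Function.comp_def] using h
  have hle : ∀ s, |inner ℝ (gradf (x s)) (x' s)| ≤
      (1 / 2 : ℝ) * (‖x' s‖ ^ 2 + ‖gradf (x s)‖ ^ 2) := by
    intro s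
    have h := abs_real_inner_le_norm (gradf (x s)) (x' s)
    nlinarith [sq_nonneg (‖gradf (x s)‖ - ‖x' s‖)]
  have hI : Integrable fun s => (1 / 2 : ℝ) * (‖x' s‖ ^ 2 + ‖gradf (x s)‖ ^ 2) :=
    (hint1.add hint2).const_mul _
  have hmeas : AEStronglyMeasurable (fun s => inner ℝ (gradf (x s)) (x' s)) volume := by
    have h : (fun s => inner ℝ (gradf (x s)) (x' s)) = deriv (fun s => f (x s)) := by
      funext s
      exact (hg s).deriv.symm
    rw [h]
    exact (measurable_deriv _).aestronglyMeasurable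
  have hgi : Integrable (fun s => inner ℝ (gradf (x s)) (x' s)) :=
    hI.mono' hmeas (Eventually.of_forall hle)
  have hftc : ∫ s, inner ℝ (gradf (x s)) (x' s) = f cp - f cm :=
    integral_of_hasDerivAt_of_tendsto hg hgi
      ((hf cm).hasFDerivAt.continuousAt.tendsto.comp hcm)
      ((hf cp).hasFDerivAt.continuousAt.tendsto.comp hcp)
  rw [← integral_const_mul]
  refine ⟨?_, fun h => ?_⟩
  · rw [← hftc, ge_iff_le]
    exact abs_integral_le_integral_abs.trans (integral_mono hgi.abs hI hle)
  · rw [← neg_sub, ← hftc, ← integral_neg]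
    congr 1
    funext s
    rw [h s, inner_neg_right, norm_neg, real_inner_self_eq_norm_sq]
    ring
end
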